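/- Let Ω be an open set in ℝ^n, n ≥ 3, and let φ:(0,∞)→(0,∞) be a nondecreasing function satisfying the Calderón-type condition ∫_{t_*}^∞ (t/φ(t))^{1/(n−2)} dt < ∞ for some t_* ∈ (0,∞). Then every continuous open mapping f:Ω→ℝ^n of the Orlicz–Sobolev class W^{1,φ}_loc(Ω) has a total differential at almost every point of Ω (with respect to Lebesgue measure). -/

import Mathlib

open MeasureTheory Metric Set Filter
open scoped ENNReal NNReal Topology RealInnerProductSpace Classical

noncomputable section

abbrev Eucl (n : ℕ) : Type := EuclideanSpace ℝ (Fin n)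

/-- A `k`-dimensional surface in `ℝⁿ`: a continuous map defined on an open subset of the
one-point compactification of `ℝᵏ`. -/
structure Surface (n k : ℕ) where
  dom : Set (OnePoint (Eucl k))
  isOpen_dom : IsOpen dom
  toFun : OnePoint (Eucl k) → Eucl n
  continuousOn : ContinuousOn toFun dom

namespace Surface

variable {n k : ℕ}

/-- The multiplicity function `N(S,y)` of a surface. -/
def mult (S : Surface n k) (y : Eucl n) : ℝ≥0∞ :=
  ((S.dom ∩ S.toFun ⁻¹' {y}).encard : ℕ∞)

/-- The integral `∫_S ρ dA = ∫ ρ(y) N(S,y) dH^k(y)` of `ρ` over the surface `S`. -/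
def sint (S : Surface n k) (ρ : Eucl n → ℝ≥0∞) : ℝ≥0∞ :=
  ∫⁻ y, ρ y * S.mult y ∂(μH[(k : ℝ)] : Measure (Eucl n))

end Surface

/-- Admissible functions for a family of `k`-surfaces. -/
def surfAdm {n : ℕ} (k : ℕ) (Γ : Set (Surface n k)) : Set (Eucl n → ℝ≥0∞) :=
  {ρ | Measurable ρ ∧ ∀ S ∈ Γ, 1 ≤ S.sint fun y => ρ y ^ k}

/-- The `p`-modulus of a family of `k`-surfaces. -/
def surfModulus {n : ℕ} (p : ℝ) (k : ℕ) (Γ : Set (Surface n k)) : ℝ≥0∞ :=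
  ⨅ ρ ∈ surfAdm k Γ, ∫⁻ x, ρ x ^ p

/-- Extensively `p`-admissible functions: admissibility may fail on a subfamily of
`p`-modulus zero. -/
def extAdm {n : ℕ} (p : ℝ) (k : ℕ) (Γ : Set (Surface n k)) : Set (Eucl n → ℝ≥0∞) :=
  {ρ | Measurable ρ ∧ surfModulus p k {S ∈ Γ | ¬ 1 ≤ S.sint fun y => ρ y ^ k} = 0}

/-- The family of the (injectively parametrized, nonempty) surfaces `S(x₀,r) ∩ D`,
`r ∈ I`. -/
def sphereFam {n : ℕ} (D : Set (Eucl n)) (x₀ : Eucl n) (I : Set ℝ) :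
    Set (Surface n (n - 1)) :=
  {S | ∃ r ∈ I, S.dom.Nonempty ∧ Set.InjOn S.toFun S.dom ∧
      S.toFun '' S.dom = sphere x₀ r ∩ D}

/-- The image of a family of surfaces under a map `f`. -/
def imageFam {n k : ℕ} (f : Eucl n → Eucl n) (Γ : Set (Surface n k)) :
    Set (Surface n k) :=
  {S' | ∃ S ∈ Γ, S'.dom = S.dom ∧ Set.EqOn S'.toFun (f ∘ S.toFun) S.dom}

/-- The spherical ring `R(x₀,a,b)`. -/
def ringA {n : ℕ} (x₀ : Eucl n) (a b : ℝ) : Set (Eucl n) :=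
  {x | a < dist x x₀ ∧ dist x x₀ < b}

/-- `‖Q‖_α(r) = (∫_{D ∩ S(x₀,r)} Q^α dA)^{1/α}`. -/
def sphNorm {n : ℕ} (D : Set (Eucl n)) (x₀ : Eucl n) (Q : Eucl n → ℝ≥0∞)
    (α : ℝ) (r : ℝ) : ℝ≥0∞ :=
  (∫⁻ x in D ∩ sphere x₀ r, Q x ^ α ∂(μH[((n : ℝ) - 1)] : Measure (Eucl n))) ^ (1 / α)

/-- `f` is a lower `Q`-homeomorphism w.r.t. the `p`-modulus at `x₀`. -/
def IsLowerQHomeoAt {n : ℕ} (D : Set (Eucl n)) (f : Eucl n → Eucl n)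
    (Q : Eucl n → ℝ≥0∞) (p : ℝ) (x₀ : Eucl n) (d₀ : ℝ≥0∞) : Prop :=
  ∀ ε ε₀ : ℝ, 0 < ε → ε < ε₀ → ENNReal.ofReal ε₀ < d₀ →
    (⨅ ρ ∈ extAdm p (n - 1) (sphereFam D x₀ (Ioo ε ε₀)),
        ∫⁻ x in ringA x₀ ε ε₀, ρ x ^ p / Q x) ≤
      surfModulus p (n - 1) (imageFam f (sphereFam D x₀ (Ioo ε ε₀)))

/-- `f` is a homeomorphism of `D` onto `D'`. -/
structure IsHomeoOn {n : ℕ} (f : Eucl n → Eucl n) (D D' : Set (Eucl n)) : Prop where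
  continuousOn : ContinuousOn f D
  injOn : Set.InjOn f D
  image_eq : f '' D = D'
  isOpenMapOn : ∀ U : Set (Eucl n), U ⊆ D → IsOpen U → IsOpen (f '' U)

/-- `Df` is the weak (Sobolev) derivative of `f` on `D`, and `f ∈ W^{1,1}_loc(D)`. -/
def IsWeakDerivOn {n m : ℕ} (D : Set (Eucl n)) (f : Eucl n → Eucl m)
    (Df : Eucl n → Eucl n →L[ℝ] Eucl m) : Prop :=
  LocallyIntegrableOn f D volume ∧ LocallyIntegrableOn Df D volume ∧
  ∀ ψ : Eucl n → ℝ, ContDiff ℝ (⊤ : ℕ∞) ψ → HasCompactSupport ψ → tsupport ψ ⊆ D →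
    ∀ v : Eucl n, ∫ x, ψ x • Df x v = - ∫ x, fderiv ℝ ψ x v • f x

/-- The Frobenius norm `|∇f| = (Σ_{i,j} (∂f_i/∂x_j)²)^{1/2}` of a linear map. -/
def frobNorm {n m : ℕ} (A : Eucl n →L[ℝ] Eucl m) : ℝ :=
  Real.sqrt (∑ i : Fin m, ∑ j : Fin n, (A (EuclideanSpace.single j 1) i) ^ 2)

/-- The Orlicz–Sobolev class `W^{1,φ}_loc(D)` (with explicit weak derivative `Df`). -/
def MemOrliczSobolevOn {n m : ℕ} (φ : ℝ → ℝ) (D : Set (Eucl n))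
    (f : Eucl n → Eucl m) (Df : Eucl n → Eucl n →L[ℝ] Eucl m) : Prop :=
  IsWeakDerivOn D f Df ∧
  ∀ K : Set (Eucl n), K ⊆ D → IsCompact K →
    (∫⁻ x in K, ENNReal.ofReal (φ (frobNorm (Df x)))) < ⊤

/-- `φ` is nondecreasing and positive on `(0,∞)`. -/
def NondecPos (φ : ℝ → ℝ) : Prop :=
  (∀ s t : ℝ, 0 < s → s ≤ t → φ s ≤ φ t) ∧ ∀ t : ℝ, 0 < t → 0 < φ t

/-- The Calderón-type condition `∫_{t₀}^∞ (t/φ(t))^{1/(n-2)} dt < ∞`. -/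
def CalderonCond (n : ℕ) (φ : ℝ → ℝ) : Prop :=
  ∃ t₀ : ℝ, 0 < t₀ ∧
    IntegrableOn (fun t => (t / φ t) ^ (1 / ((n : ℝ) - 2))) (Ioi t₀) volume

/-- `f` (with a.e. derivative `Df`) has finite distortion on `D`. -/
def HasFiniteDistortionOn {n : ℕ} (D : Set (Eucl n))
    (Df : Eucl n → Eucl n →L[ℝ] Eucl n) : Prop :=
  ∃ K : Eucl n → ℝ, AEMeasurable K (volume.restrict D) ∧
    ∀ᵐ x ∂volume.restrict D, 1 ≤ K x ∧ ‖Df x‖ ^ n ≤ K x * (Df x).det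

/-- The distortion `K_p(x,f)` for a map with derivative `Df`. -/
def distortionKp {n : ℕ} (p : ℝ) (Df : Eucl n → Eucl n →L[ℝ] Eucl n)
    (x : Eucl n) : ℝ≥0∞ :=
  if (Df x).det ≠ 0 then ENNReal.ofReal (‖Df x‖ ^ p / (Df x).det)
  else if Df x = 0 then 1 else ⊤

/-- The multiplicity function of a curve `γ : [0,1] → ℝⁿ`. -/
def curveMult {n : ℕ} (γ : ℝ → Eucl n) (y : Eucl n) : ℝ≥0∞ :=
  (({t ∈ Icc (0:ℝ) 1 | γ t = y}).encard : ℕ∞)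

/-- The line integral `∫_γ ρ ds = ∫ ρ(y) N(γ,y) dH¹(y)`. -/
def curveInt {n : ℕ} (γ : ℝ → Eucl n) (ρ : Eucl n → ℝ≥0∞) : ℝ≥0∞ :=
  ∫⁻ y, ρ y * curveMult γ y ∂(μH[(1 : ℝ)] : Measure (Eucl n))

/-- The family of curves joining `A` and `B` in `G`. -/
def curveJoin {n : ℕ} (A B G : Set (Eucl n)) : Set (ℝ → Eucl n) :=
  {γ | ContinuousOn γ (Icc 0 1) ∧ γ 0 ∈ A ∧ γ 1 ∈ B ∧ Set.MapsTo γ (Icc 0 1) G}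

/-- The `q`-modulus of a family of curves. -/
def curveModulus {n : ℕ} (q : ℝ) (Γ : Set (ℝ → Eucl n)) : ℝ≥0∞ :=
  ⨅ ρ ∈ {ρ : Eucl n → ℝ≥0∞ | Measurable ρ ∧ ∀ γ ∈ Γ, 1 ≤ curveInt γ ρ},
    ∫⁻ x, ρ x ^ q

/-- The `q`-capacity of the condenser `(A,C)`, via the modulus of joining curves. -/
def condenserCap {n : ℕ} (q : ℝ) (A C : Set (Eucl n)) : ℝ≥0∞ :=
  curveModulus q (curveJoin (frontier A) (frontier C) (A \ C))

/-- `L(x₀,f) = limsup_{x→x₀} |f(x)-f(x₀)|/|x-x₀|`. -/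
def LAt {n : ℕ} (f : Eucl n → Eucl n) (x₀ : Eucl n) : ℝ≥0∞ :=
  limsup (fun x => edist (f x) (f x₀) / edist x x₀) (𝓝[≠] x₀)

/-- `k_p(x₀) = limsup_{ε→0} (⨍_{B(x₀,ε)} K_p(x,f)^{(n-1)/(p-n+1)} dm)^{(p-n+1)/(n-1)}`. -/
def kpAt {n : ℕ} (p : ℝ) (Df : Eucl n → Eucl n →L[ℝ] Eucl n) (x₀ : Eucl n) : ℝ≥0∞ :=
  limsup (fun ε : ℝ =>
      ((∫⁻ x in ball x₀ ε, distortionKp p Df x ^ (((n:ℝ)-1)/(p-(n:ℝ)+1))) /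
        volume (ball x₀ ε)) ^ ((p-(n:ℝ)+1)/((n:ℝ)-1)))
    (𝓝[>] (0:ℝ))

/-- `f` is absolutely continuous on `S` w.r.t. `d`-dimensional Hausdorff measure. -/
def ACOnSet {n m : ℕ} (f : Eucl n → Eucl m) (S : Set (Eucl n)) (d : ℝ) : Prop :=
  ∀ ε : ℝ, 0 < ε → ∃ δ : ℝ, 0 < δ ∧ ∀ A : Set (Eucl n), A ⊆ S →
    (μH[d] : Measure (Eucl n)) A < ENNReal.ofReal δ →
      (μH[d] : Measure (Eucl m)) (f '' A) < ENNReal.ofReal ε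

/-- `f` is locally absolutely continuous on `S` w.r.t. `H^d`. -/
def LocACOnSet {n m : ℕ} (f : Eucl n → Eucl m) (S : Set (Eucl n)) (d : ℝ) : Prop :=
  ∀ x ∈ S, ∃ V ∈ 𝓝 x, ACOnSet f (S ∩ V) d

/-- The Luzin (N)-property of `f` on `S` w.r.t. `d`-dimensional Hausdorff measure. -/
def LusinNOn {n m : ℕ} (f : Eucl n → Eucl m) (S : Set (Eucl n)) (d : ℝ) : Prop :=
  ∀ A : Set (Eucl n), A ⊆ S → (μH[d] : Measure (Eucl n)) A = 0 →
    (μH[d] : Measure (Eucl m)) (f '' A) = 0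

end

/-- `φ` cut off to vanish on nonpositive reals. -/
noncomputable def phi0 (φ : ℝ → ℝ) (t : ℝ) : ℝ := if 0 < t then φ t else 0

/-- The Calderon integrand. -/
noncomputable def psi0 (k : ℕ) (φ : ℝ → ℝ) (t : ℝ) : ℝ :=
  (t / phi0 φ t) ^ (1 / ((k : ℝ) - 1))

lemma phi0_monotone {φ : ℝ → ℝ} (hφ : NondecPos φ) : Monotone (phi0 φ) := by
  intro s t hst
  unfold phi0
  split_ifs with h1 h2 h2
  · exact hφ.1 s t h1 hst
  · exact absurd (h1.trans_le hst) h2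
  · exact (hφ.2 t h2).le
  · exact le_rfl

lemma phi0_measurable {φ : ℝ → ℝ} (hφ : NondecPos φ) : Measurable (phi0 φ) :=
  (phi0_monotone hφ).measurable

lemma psi0_measurable (k : ℕ) {φ : ℝ → ℝ} (hφ : NondecPos φ) : Measurable (psi0 k φ) :=
  (measurable_id.div (phi0_measurable hφ)).pow_const _

lemma exists_lambda (k : ℕ) (hk : 2 ≤ k) {φ : ℝ → ℝ} (hφ : NondecPos φ)
    (hcal : CalderonCond (k + 1) φ) :
    ∃ lam : ℝ → ℝ≥0∞, Measurable lam ∧ (∫⁻ s in Ioo (0:ℝ) 1, lam s) < ⊤ ∧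
      ∀ s a : ℝ, 0 < s → 0 ≤ a →
        ENNReal.ofReal a ≤ lam s + (if psi0 k φ a < s then ENNReal.ofReal a else 0) := by
  obtain ⟨t₀, ht₀, hint⟩ := hcal
  have hpm := psi0_measurable k hφ
  have hk' : (1:ℝ) ≤ (k:ℝ) - 1 := by
    have : (2:ℝ) ≤ k := by exact_mod_cast hk
    linarith
  have hme : Measurable (fun p : ℝ × ℝ => 
      (if p.1 ≤ 2 * psi0 k φ p.2 then (1:ℝ≥0∞) else 0)) := by
    apply Measurable.ite _ measurable_const measurable_const
    exact measurableSet_le measurable_fst ((hpm.comp measurable_snd).const_mul 2)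
  refine ⟨fun s => ENNReal.ofReal (2 * t₀) + 2 * ∫⁻ t in Ioi t₀,
    (if s ≤ 2 * psi0 k φ t then 1 else 0), ?_, ?_, ?_⟩
  · apply Measurable.const_add
    apply Measurable.const_mul
    exact hme.lintegral_prod_right'
  · have h1 : ∫⁻ s in Ioo (0:ℝ) 1, ∫⁻ t in Ioi t₀, 
      (if s ≤ 2 * psi0 k φ t then (1:ℝ≥0∞) else 0) < ⊤ := by
      rw [lintegral_lintegral_swap hme.aemeasurable]
      have h2 : ∀ t ∈ Ioi t₀, ∫⁻ s in Ioo (0:ℝ) 1, 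
          (if s ≤ 2 * psi0 k φ t then (1:ℝ≥0∞) else 0) ≤ 
          2 * ‖(t / φ t) ^ (1 / (((k+1:ℕ) : ℝ) - 2))‖ₑ := by
        intro t ht
        have ht' : 0 < t := ht₀.trans ht
        have e1 : (t / φ t) ^ (1 / (((k+1:ℕ) : ℝ) - 2)) = psi0 k φ t := by
          unfold psi0 phi0
          rw [if_pos ht']
          congr 2
          push_cast; ring
        rw [e1]
        have e2 : 0 ≤ psi0 k φ t := by
          unfold psi0 phi0
          rw [if_pos ht']
          exact Real.rpow_nonneg (div_nonneg ht'.le (hφ.2 t ht').le) _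
        calc _ ≤ ∫⁻ s in Ioo (0:ℝ) 1, (Iic (2 * psi0 k φ t)).indicator 1 s := by
              apply lintegral_mono; intro s
              simp only [indicator, mem_Iic, Pi.one_apply]; exact le_rfl
          _ = volume (Iic (2 * psi0 k φ t) ∩ Ioo (0:ℝ) 1) := by
              rw [lintegral_indicator_one measurableSet_Iic, Measure.restrict_apply measurableSet_Iic]
          _ ≤ volume (Ioc 0 (2 * psi0 k φ t)) := by
              apply measure_mono
              rintro s ⟨h, h'⟩
              exact ⟨h'.1, h⟩
          _ = ENNReal.ofReal (2 * psi0 k φ t) := by simp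
          _ = _ := by
              rw [ENNReal.ofReal_mul (by norm_num), Real.enorm_of_nonneg e2]
              simp
      refine (setLIntegral_mono' measurableSet_Ioi h2).trans_lt ?_
      rw [lintegral_const_mul' _ _ (by simp)]
      exact ENNReal.mul_lt_top (by simp) hint.2
    rw [lintegral_add_left measurable_const, lintegral_const_mul' _ _ (by simp)]
    apply ENNReal.add_lt_top.2
    refine ⟨by rw [setLIntegral_const]; exact ENNReal.mul_lt_top ENNReal.ofReal_lt_top (by simp),
      ENNReal.mul_lt_top (by simp) h1⟩
  · intro s a hs ha
    by_cases h : psi0 k φ a < s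
    · rw [if_pos h]; exact le_add_self
    rw [if_neg h, add_zero]
    push Not at h
    by_cases h2 : a ≤ 2 * t₀
    · exact (ENNReal.ofReal_le_ofReal h2).trans le_self_add
    push Not at h2
    refine le_trans ?_ le_add_self
    have key : ∀ t ∈ Ioo (a/2) a, s ≤ 2 * psi0 k φ t := by
      intro t ht
      refine h.trans ?_
      have ha' : 0 < a := by linarith
      have ht' : 0 < t := by linarith [ht.1]
      unfold psi0 phi0
      rw [if_pos ha', if_pos ht']
      have hpa := hφ.2 a ha'
      have hpt := hφ.2 t ht'
      have hmon := hφ.1 t a ht' ht.2.le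
      have h3 : a / φ a ≤ 2 * (t / φ t) := by
        rw [← mul_div_assoc]
        exact div_le_div₀ (by linarith) (by linarith [ht.1]) hpt hmon
      calc _ ≤ (2 * (t / φ t)) ^ (1 / ((k:ℝ) - 1)) := 
            Real.rpow_le_rpow (by positivity) h3 (by positivity)
        _ = 2 ^ (1 / ((k:ℝ) - 1)) * (t / φ t) ^ (1 / ((k:ℝ) - 1)) := 
            Real.mul_rpow (by norm_num) (by positivity)
        _ ≤ _ := by
            gcongr
            calc (2:ℝ) ^ (1 / ((k:ℝ) - 1)) ≤ 2 ^ (1:ℝ) := by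
                  apply Real.rpow_le_rpow_of_exponent_le (by norm_num)
                  rw [div_le_one (by linarith)]; exact hk'
              _ = 2 := by simp
    calc ENNReal.ofReal a = 2 * ENNReal.ofReal (a / 2) := by
          rw [show a = 2 * (a/2) by ring, ENNReal.ofReal_mul (by norm_num)]; simp
      _ = 2 * ∫⁻ t in Ioo (a/2) a, 1 := by
          simp only [lintegral_const, Measure.restrict_apply_univ, Real.volume_Ioo, one_mul]
          congr 2; ring
      _ ≤ 2 * ∫⁻ t in Ioo (a/2) a, (if s ≤ 2 * psi0 k φ t then 1 else 0) := by
          gcongr 2 * ?_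
          apply setLIntegral_mono' measurableSet_Ioo
          intro t ht
          rw [if_pos (key t ht)]
      _ ≤ _ := by
          gcongr
          intro t ht
          have := ht.1
          simp only [mem_Ioi]; linarith

lemma lintegral_pow_bound (k : ℕ) (hk : 2 ≤ k) {φ : ℝ → ℝ} (hφ : NondecPos φ) (a : ℝ) (ha : 0 ≤ a) :
    ∫⁻ s in Ioo (0:ℝ) 1, ENNReal.ofReal ((s ^ k)⁻¹) *
      (if psi0 k φ a < s then ENNReal.ofReal a else 0) ≤ ENNReal.ofReal (phi0 φ a) := by
  rcases ha.eq_or_lt with rfl | ha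
  · simp
  have hk' : (1:ℝ) ≤ (k:ℝ) - 1 := by
    have : (2:ℝ) ≤ k := by exact_mod_cast hk
    linarith
  have hpa := hφ.2 a ha
  have hph : phi0 φ a = φ a := by unfold phi0; rw [if_pos ha]
  set c := psi0 k φ a with hc
  have hcpos : 0 < c := by
    rw [hc]; unfold psi0; rw [hph]; exact Real.rpow_pos_of_pos (by positivity) _
  have hck : c ^ ((k:ℝ) - 1) = a / φ a := by
    rw [hc]; unfold psi0; rw [hph, ← Real.rpow_mul (by positivity)]
    rw [one_div, inv_mul_cancel₀ (by linarith), Real.rpow_one]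
  calc _ ≤ ∫⁻ s in Ioi c, ENNReal.ofReal a * ENNReal.ofReal (s ^ (-(k:ℝ))) := by
        rw [← lintegral_indicator measurableSet_Ioo, ← lintegral_indicator measurableSet_Ioi]
        apply lintegral_mono
        intro s
        simp only [indicator, mem_Ioo, mem_Ioi]
        split_ifs with h1 h2 h2
        · rw [mul_comm, Real.rpow_neg h1.1.le, Real.rpow_natCast]
        · simp
        · simp
        · simp
    _ = ENNReal.ofReal a * ENNReal.ofReal (∫ s in Ioi c, s ^ (-(k:ℝ))) := by
        rw [lintegral_const_mul' _ _ (by simp)]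
        congr 1
        rw [ofReal_integral_eq_lintegral_ofReal]
        · exact integrableOn_Ioi_rpow_of_lt (by linarith) hcpos
        · filter_upwards [ae_restrict_mem measurableSet_Ioi] with s hs
          exact Real.rpow_nonneg (hcpos.le.trans (le_of_lt hs)) _
    _ ≤ _ := by
        rw [integral_Ioi_rpow_of_lt (by linarith) hcpos, ← ENNReal.ofReal_mul ha.le]
        apply ENNReal.ofReal_le_ofReal
        rw [hph, show -(k:ℝ) + 1 = -((k:ℝ)-1) by ring, Real.rpow_neg hcpos.le, hck]
        rw [neg_div_neg_eq, inv_div]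
        rw [div_div, mul_div_assoc', mul_comm a, mul_div_assoc]
        have : a / (a * ((k:ℝ) - 1)) ≤ 1 := by
          rw [div_le_one (by positivity)]
          nlinarith
        nlinarith

lemma lintegral_homothety (k : ℕ) (H : (Fin k → ℝ) → ℝ≥0∞) (hH : Measurable H) (s : ℝ) (hs : 0 < s)
    (b : Fin k → ℝ) :
    ∫⁻ z, H (s • z + b) = ENNReal.ofReal ((s ^ k)⁻¹) * ∫⁻ y, H y := by
  have h1 : ∫⁻ z, H (s • z + b) = ∫⁻ w, H (w + b) ∂(Measure.map (fun z : Fin k → ℝ => s • z) volume) := by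
    rw [lintegral_map (by fun_prop) (by fun_prop)]
  rw [h1]
  rw [show (fun z : Fin k → ℝ => s • z) = (s • ·) from rfl, Measure.map_addHaar_smul _ hs.ne']
  rw [lintegral_smul_measure, lintegral_add_right_eq_self (fun y => H y) b]
  have : 0 ≤ (s ^ k)⁻¹ := by positivity
  simp [abs_of_nonneg this]

lemma enorm_sub_le_lintegral {E F : Type*} [NormedAddCommGroup E] [NormedSpace ℝ E]
    [NormedAddCommGroup F] [NormedSpace ℝ F] [CompleteSpace F]
    (u : E → F) (hu : ContDiff ℝ 1 u) (x z : E) :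
    ‖u x - u z‖ₑ ≤ ∫⁻ s in Ioo (0:ℝ) 1, ‖fderiv ℝ u (x + s • (z - x))‖ₑ * ‖z - x‖ₑ := by
  have hd : ∀ s : ℝ, HasDerivAt (fun s : ℝ => u (x + s • (z - x)))
      (fderiv ℝ u (x + s • (z - x)) (z - x)) s := by
    intro s
    have h1 : HasDerivAt (fun s : ℝ => x + s • (z - x)) (z - x) s := by
      simpa using ((hasDerivAt_id s).smul_const (z - x)).const_add x
    exact ((hu.differentiable one_ne_zero) _).hasFDerivAt.comp_hasDerivAt s h1
  have hcont : Continuous (fun s : ℝ => fderiv ℝ u (x + s • (z - x)) (z - x)) := by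
    have := hu.continuous_fderiv one_ne_zero
    fun_prop
  have hftc := intervalIntegral.integral_eq_sub_of_hasDerivAt (a := 0) (b := 1)
    (fun s _ => hd s) (hcont.intervalIntegrable 0 1)
  simp only [one_smul, zero_smul, add_zero, add_sub_cancel] at hftc
  rw [← enorm_neg, neg_sub, ← hftc, intervalIntegral.integral_of_le zero_le_one]
  refine (enorm_integral_le_lintegral_enorm _).trans ?_
  rw [← restrict_Ioo_eq_restrict_Ioc]
  apply lintegral_mono
  intro s
  exact ContinuousLinearMap.le_opENorm _ _

lemma osc_bound (k : ℕ) {F : Type*} [NormedAddCommGroup F] [NormedSpace ℝ F] [CompleteSpace F]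
    (u : (Fin k → ℝ) → F) (hu : ContDiff ℝ 1 u) (c : Fin k → ℝ) (R : ℝ) (hR : 0 < R)
    (C : ℝ≥0∞) (lam : ℝ → ℝ≥0∞) (hlam : Measurable lam)
    (G : ℝ → (Fin k → ℝ) → ℝ≥0∞) (hG : Measurable (Function.uncurry G))
    (Psi : (Fin k → ℝ) → ℝ≥0∞)
    (h1 : ∀ s ∈ Ioo (0:ℝ) 1, ∀ y ∈ closedBall c R, ‖fderiv ℝ u y‖ₑ ≤ C * (lam s + G s y))
    (h2 : ∀ y ∈ closedBall c R,
      ∫⁻ s in Ioo (0:ℝ) 1, ENNReal.ofReal ((s ^ k)⁻¹) * G s y ≤ Psi y)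
    (x : Fin k → ℝ) (hx : x ∈ closedBall c R) :
    ∫⁻ z in closedBall c R, ‖u x - u z‖ₑ ≤
      C * ENNReal.ofReal (2 * R) * (volume (closedBall c R) * (∫⁻ s in Ioo (0:ℝ) 1, lam s) +
        ∫⁻ y in closedBall c R, Psi y) := by
  have hmem : ∀ s ∈ Ioo (0:ℝ) 1, ∀ z ∈ closedBall c R, x + s • (z - x) ∈ closedBall c R := by
    intro s hs z hz
    exact (convex_closedBall c R).add_smul_sub_mem hx hz ⟨hs.1.le, hs.2.le⟩
  have hGs : ∀ s, Measurable (G s) := fun s => hG.comp (measurable_const.prodMk measurable_id)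
  have hGm : Measurable (fun p : (Fin k → ℝ) × ℝ => G p.2 (x + p.2 • (p.1 - x))) := by
    have : Measurable (fun p : (Fin k → ℝ) × ℝ => (p.2, x + p.2 • (p.1 - x))) := by fun_prop
    exact hG.comp this
  have hsc : ∀ s ∈ Ioo (0:ℝ) 1, ∫⁻ z in closedBall c R, G s (x + s • (z - x)) ≤
      ENNReal.ofReal ((s ^ k)⁻¹) * ∫⁻ y in closedBall c R, G s y := by
    intro s hs
    rw [← lintegral_indicator measurableSet_closedBall (G s),
      ← lintegral_homothety k _ ((hGs s).indicator measurableSet_closedBall) s hs.1 (x - s • x),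
      ← lintegral_indicator measurableSet_closedBall]
    apply lintegral_mono
    intro z
    by_cases hz : z ∈ closedBall c R
    · simp only
      have e : s • z + (x - s • x) = x + s • (z - x) := by rw [smul_sub]; abel
      rw [indicator_of_mem hz, e, indicator_of_mem (hmem s hs z hz)]
    · rw [indicator_of_notMem hz]; exact zero_le
  have hK : ∀ z ∈ closedBall c R, ‖u x - u z‖ₑ ≤ 
      C * ENNReal.ofReal (2 * R) * ((∫⁻ s in Ioo (0:ℝ) 1, lam s) +
       ∫⁻ s in Ioo (0:ℝ) 1, G s (x + s • (z - x))) := by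
    intro z hz
    refine (enorm_sub_le_lintegral u hu x z).trans ?_
    have hzx : ‖z - x‖ₑ ≤ ENNReal.ofReal (2 * R) := by
      rw [← ofReal_norm]
      apply ENNReal.ofReal_le_ofReal
      rw [← dist_eq_norm]
      have := dist_triangle_right z x c
      rw [mem_closedBall] at hz hx
      linarith
    have hGz : Measurable (fun s => G s (x + s • (z - x))) := 
      hGm.comp (measurable_const.prodMk measurable_id)
    calc _ ≤ ∫⁻ s in Ioo (0:ℝ) 1, C * ENNReal.ofReal (2 * R) * (lam s + G s (x + s • (z - x))) := by
          apply setLIntegral_mono' measurableSet_Ioo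
          intro s hs
          rw [mul_right_comm]
          gcongr
          exact h1 s hs _ (hmem s hs z hz)
      _ = _ := by
          rw [lintegral_const_mul _ (by fun_prop), lintegral_add_left hlam]
  calc _ ≤ ∫⁻ z in closedBall c R, C * ENNReal.ofReal (2 * R) * ((∫⁻ s in Ioo (0:ℝ) 1, lam s) +
       ∫⁻ s in Ioo (0:ℝ) 1, G s (x + s • (z - x))) := setLIntegral_mono' measurableSet_closedBall hK
    _ = C * ENNReal.ofReal (2 * R) * (volume (closedBall c R) * (∫⁻ s in Ioo (0:ℝ) 1, lam s) +
        ∫⁻ z in closedBall c R, ∫⁻ s in Ioo (0:ℝ) 1, G s (x + s • (z - x))) := by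
        rw [lintegral_const_mul, lintegral_add_left measurable_const, setLIntegral_const, mul_comm (volume _)]
        exact measurable_const.add hGm.lintegral_prod_right'
    _ ≤ _ := by
        gcongr C * ENNReal.ofReal (2 * R) * (_ + ?_)
        rw [lintegral_lintegral_swap hGm.aemeasurable]
        calc _ ≤ ∫⁻ s in Ioo (0:ℝ) 1, ∫⁻ y in closedBall c R, ENNReal.ofReal ((s ^ k)⁻¹) * G s y := by
              apply setLIntegral_mono' measurableSet_Ioo
              intro s hs
              refine (hsc s hs).trans ?_
              rw [lintegral_const_mul _ (hGs s)]
          _ = ∫⁻ y in closedBall c R, ∫⁻ s in Ioo (0:ℝ) 1, ENNReal.ofReal ((s ^ k)⁻¹) * G s y := by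
              apply lintegral_lintegral_swap
              apply Measurable.aemeasurable
              have : Measurable fun p : ℝ × (Fin k → ℝ) => ENNReal.ofReal ((p.1 ^ k)⁻¹) := by fun_prop
              exact this.mul hG
          _ ≤ _ := setLIntegral_mono' measurableSet_closedBall h2

lemma osc_bound2 (k : ℕ) {F : Type*} [NormedAddCommGroup F] [NormedSpace ℝ F] [CompleteSpace F]
    (u : (Fin k → ℝ) → F) (hu : ContDiff ℝ 1 u) (c : Fin k → ℝ) (R : ℝ) (hR : 0 < R)
    (C : ℝ≥0∞) (lam : ℝ → ℝ≥0∞) (hlam : Measurable lam)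
    (G : ℝ → (Fin k → ℝ) → ℝ≥0∞) (hG : Measurable (Function.uncurry G))
    (Psi : (Fin k → ℝ) → ℝ≥0∞)
    (h1 : ∀ s ∈ Ioo (0:ℝ) 1, ∀ y ∈ closedBall c R, ‖fderiv ℝ u y‖ₑ ≤ C * (lam s + G s y))
    (h2 : ∀ y ∈ closedBall c R,
      ∫⁻ s in Ioo (0:ℝ) 1, ENNReal.ofReal ((s ^ k)⁻¹) * G s y ≤ Psi y)
    (x : Fin k → ℝ) (hx : x ∈ closedBall c R) (x' : Fin k → ℝ) (hx' : x' ∈ closedBall c R) :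
    ‖u x - u x'‖ₑ ≤
      2 * (C * ENNReal.ofReal (2 * R)) * ((∫⁻ s in Ioo (0:ℝ) 1, lam s) +
        ENNReal.ofReal (((2 * R) ^ k)⁻¹) * ∫⁻ y in closedBall c R, Psi y) := by
  have hx1 := osc_bound k u hu c R hR C lam hlam G hG Psi h1 h2 x hx
  have hx2 := osc_bound k u hu c R hR C lam hlam G hG Psi h1 h2 x' hx'
  set B := C * ENNReal.ofReal (2 * R)
  set V := volume (closedBall c R) with hV
  have hVe : V = ENNReal.ofReal ((2 * R) ^ k) := by
    rw [hV, Real.volume_pi_closedBall _ hR.le]; simp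
  have hV0 : V ≠ 0 := by rw [hVe]; simp; positivity
  have hVt : V ≠ ⊤ := by rw [hVe]; simp
  have hVi : V⁻¹ = ENNReal.ofReal (((2 * R) ^ k)⁻¹) := by
    rw [hVe, ENNReal.ofReal_inv_of_pos (by positivity)]
  have hsum : ‖u x - u x'‖ₑ * V ≤ 2 * (B * (V * (∫⁻ s in Ioo (0:ℝ) 1, lam s) +
        ∫⁻ y in closedBall c R, Psi y)) := by
    calc ‖u x - u x'‖ₑ * V = ∫⁻ z in closedBall c R, ‖u x - u x'‖ₑ := by rw [setLIntegral_const]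
      _ ≤ ∫⁻ z in closedBall c R, (‖u x - u z‖ₑ + ‖u x' - u z‖ₑ) := by
          apply lintegral_mono
          intro z
          have : u x - u x' = (u x - u z) - (u x' - u z) := by abel
          simp only
          rw [this]
          exact enorm_sub_le
      _ = (∫⁻ z in closedBall c R, ‖u x - u z‖ₑ) + ∫⁻ z in closedBall c R, ‖u x' - u z‖ₑ := by
          apply lintegral_add_left
          exact (continuous_const.sub hu.continuous).enorm.measurable
      _ ≤ _ := by rw [two_mul]; gcongr
  rw [← hVi]
  rw [← ENNReal.le_div_iff_mul_le (Or.inl hV0) (Or.inl hVt)] at hsum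
  refine hsum.trans (le_of_eq ?_)
  rw [ENNReal.div_eq_inv_mul]
  have : V⁻¹ * V = 1 := ENNReal.inv_mul_cancel hV0 hVt
  calc _ = 2 * B * ((V⁻¹ * V) * (∫⁻ s in Ioo (0:ℝ) 1, lam s) + V⁻¹ * ∫⁻ y in closedBall c R, Psi y) := by ring
    _ = _ := by rw [this, one_mul]

lemma mollify {n : ℕ} (Ω : Set (Eucl n)) (f : Eucl n → Eucl n) (Df : Eucl n → Eucl n →L[ℝ] Eucl n)
    (hcont : ContinuousOn f Ω) (hw : IsWeakDerivOn Ω f Df) (x₀ : Eucl n) (ρ ρ' : ℝ)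
    (hρ : ρ' < ρ) (hΩ : closedBall x₀ ρ ⊆ Ω) (ε : ℝ) (hε : 0 < ε)
    (g : Eucl n → ℝ) (hgD : ∀ᵐ x ∂volume.restrict (closedBall x₀ ρ), ‖Df x‖ ≤ g x) :
    ∃ (h : Eucl n → Eucl n) (η : Eucl n → ℝ≥0∞), ContDiff ℝ 1 h ∧ Measurable η ∧
      (∫⁻ w, η w) = 1 ∧ (∀ w, η w ≠ 0 → ‖w‖ < ρ - ρ') ∧
      (∀ y ∈ closedBall x₀ ρ', dist (h y) (f y) ≤ ε) ∧
      (∀ y ∈ closedBall x₀ ρ', ‖fderiv ℝ h y‖ₑ ≤ ∫⁻ w, η w * ENNReal.ofReal (g (y - w))) := by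
  set K := closedBall x₀ ρ with hKdef
  have hK : IsCompact K := isCompact_closedBall _ _
  have hKm : MeasurableSet K := measurableSet_closedBall
  have hfK : ContinuousOn f K := hcont.mono hΩ
  obtain ⟨δ₀, hδ₀, huc⟩ := Metric.uniformContinuousOn_iff_le.1
    (hK.uniformContinuousOn_of_continuous hfK) ε hε
  set δ := min (δ₀) (ρ - ρ') with hδ
  have hδpos : 0 < δ := lt_min hδ₀ (by linarith)
  let b : ContDiffBump (0 : Eucl n) := ⟨δ / 2, δ, by linarith, by linarith⟩
  set e := b.normed (volume : Measure (Eucl n)) with he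
  set f0 := K.indicator f with hf0
  have hf0i : Integrable f0 := (integrable_indicator_iff hKm).2 (hfK.integrableOn_compact hK)
  have hf0l : LocallyIntegrable f0 := hf0i.locallyIntegrable
  have heC : ContDiff ℝ (⊤ : ℕ∞) e := b.contDiff_normed
  have heC1 : ContDiff ℝ 1 e := b.contDiff_normed (n := 1)
  have hes : HasCompactSupport e := b.hasCompactSupport_normed
  have hets : tsupport e = closedBall 0 δ := b.tsupport_normed_eq
  have hsub : ∀ y ∈ closedBall x₀ ρ', ∀ t, y - t ∈ closedBall (0 : Eucl n) δ → t ∈ K := by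
    intro y hy t ht
    rw [mem_closedBall_zero_iff] at ht
    rw [hKdef, mem_closedBall]
    rw [mem_closedBall] at hy
    have h1 : dist t y ≤ ρ - ρ' := by
      rw [dist_comm, dist_eq_norm]; exact ht.trans (min_le_right _ _)
    linarith [dist_triangle t y x₀]
  refine ⟨convolution e f0 (ContinuousLinearMap.lsmul ℝ ℝ) volume, 
    fun w => ENNReal.ofReal (e w), ?_, ?_, ?_, ?_, ?_, ?_⟩
  · exact hes.contDiff_convolution_left (n := 1) _ heC1 hf0l
  · exact heC.continuous.measurable.ennreal_ofReal
  · rw [← ofReal_integral_eq_lintegral_ofReal b.integrable_normed 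
      (Filter.Eventually.of_forall b.nonneg_normed), b.integral_normed, ENNReal.ofReal_one]
  · intro w hw
    have h1 : w ∈ Function.support e := by
      intro h0; apply hw; simp [h0]
    rw [he, b.support_normed_eq, mem_ball_zero_iff] at h1
    exact h1.trans_le (min_le_right _ _)
  · intro y hy
    have hyK : y ∈ K := hsub y hy y (by simp [hδpos.le])
    have := b.dist_normed_convolution_le (μ := volume) (x₀ := y) (ε := ε) hf0i.aestronglyMeasurable
      (by
        intro x hx
        have hx' : dist x y < δ := hx
        have hxK : x ∈ K := hsub y hy x (by
          rw [mem_closedBall_zero_iff, ← dist_eq_norm, dist_comm]; exact hx'.le)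
        rw [hf0, indicator_of_mem hxK, indicator_of_mem hyK]
        exact huc x hxK y hyK (hx'.le.trans (min_le_left _ _)))
    rwa [hf0, indicator_of_mem hyK] at this
  · intro y hy
    have hd := hes.hasFDerivAt_convolution_left (ContinuousLinearMap.lsmul ℝ ℝ) heC1 hf0l y
      (μ := volume)
    rw [hd.fderiv]
    apply ContinuousLinearMap.opENorm_le_bound
    intro v
    have hex := (hes.fderiv (𝕜 := ℝ)).convolutionExists_left 
      ((ContinuousLinearMap.lsmul ℝ ℝ : ℝ →L[ℝ] Eucl n →L[ℝ] Eucl n).precompL (Eucl n)) 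
      (heC1.continuous_fderiv one_ne_zero) hf0l y
    have h1 : (convolution (fderiv ℝ e) f0 
        ((ContinuousLinearMap.lsmul ℝ ℝ : ℝ →L[ℝ] Eucl n →L[ℝ] Eucl n).precompL (Eucl n)) volume y) v
        = ∫ t, (fderiv ℝ e t v) • f0 (y - t) := by
      unfold convolution
      rw [ContinuousLinearMap.integral_apply hex]
      rfl
    have h2 : ∫ t, (fderiv ℝ e t v) • f0 (y - t) = ∫ t, (fderiv ℝ e (y - t) v) • f0 t := by
      rw [← integral_sub_left_eq_self (fun t => (fderiv ℝ e t v) • f0 (y - t)) volume y]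
      simp
    set ps : Eucl n → ℝ := fun t => e (y - t) with hps
    have hpsd : ∀ t, fderiv ℝ ps t v = - fderiv ℝ e (y - t) v := by
      intro t
      have : HasFDerivAt ps ((fderiv ℝ e (y - t)).comp (-ContinuousLinearMap.id ℝ (Eucl n))) t := by
        apply HasFDerivAt.comp t ((heC1.differentiable one_ne_zero) _).hasFDerivAt
        exact (hasFDerivAt_id t).const_sub y
      rw [this.fderiv]
      simp
    have h3 : ∫ t, (fderiv ℝ e (y - t) v) • f0 t = - ∫ t, fderiv ℝ ps t v • f t := by
      rw [← integral_neg]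
      apply integral_congr_ae
      refine Filter.Eventually.of_forall fun t => ?_
      simp only [hpsd, neg_smul, neg_neg]
      by_cases ht : y - t ∈ closedBall (0 : Eucl n) δ
      · rw [hf0, indicator_of_mem (hsub y hy t ht)]
      · have : fderiv ℝ e (y - t) = 0 := by
          have hns : y - t ∉ tsupport (fderiv ℝ e) := fun h => 
            ht (hets ▸ (tsupport_fderiv_subset ℝ h))
          exact image_eq_zero_of_notMem_tsupport hns
        simp [this]
    have hpss : tsupport ps ⊆ closedBall y δ := by
      apply closure_minimal _ isClosed_closedBall
      intro t ht
      have : y - t ∈ tsupport e := subset_tsupport _ ht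
      rw [hets, mem_closedBall_zero_iff] at this
      rw [mem_closedBall, dist_comm, dist_eq_norm]; exact this
    have hballK : closedBall y δ ⊆ K := by
      intro t ht
      apply hsub y hy t
      rw [mem_closedBall_zero_iff, ← dist_eq_norm, dist_comm]; exact ht
    have h4 := hw.2.2 ps (heC.comp (contDiff_const.sub contDiff_id))
      (HasCompactSupport.intro (isCompact_closedBall y δ) 
        (fun t ht => image_eq_zero_of_notMem_tsupport fun h => ht (hpss h)))
      (hpss.trans (hballK.trans hΩ)) v
    rw [h1, h2, h3, ← h4]
    refine (enorm_integral_le_lintegral_enorm _).trans ?_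
    have h5 : ∫⁻ w, ENNReal.ofReal (e w) * ENNReal.ofReal (g (y - w)) = 
        ∫⁻ t, ENNReal.ofReal (ps t) * ENNReal.ofReal (g t) := by
      rw [← lintegral_sub_left_eq_self (fun w => ENNReal.ofReal (e w) * ENNReal.ofReal (g (y - w))) y]
      simp [hps]
    rw [h5]
    by_cases hv : ‖v‖ₑ = 0
    · have : v = 0 := by simpa using hv
      simp [this]
    rw [← lintegral_mul_const' _ _ (by simp)]
    apply lintegral_mono_ae
    rw [ae_restrict_iff' hKm] at hgD
    filter_upwards [hgD] with t ht
    by_cases hps0 : ps t = 0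
    · simp [hps0]
    · have htK : t ∈ K := hballK (hpss (subset_tsupport _ hps0))
      rw [enorm_smul, mul_assoc]
      have hp0 : 0 ≤ ps t := b.nonneg_normed _
      rw [Real.enorm_of_nonneg hp0]
      gcongr
      refine ((Df t).le_opENorm v).trans ?_
      gcongr
      rw [← ofReal_norm]
      exact ENNReal.ofReal_le_ofReal (ht htK)

/-- Parametrization of the hyperplane `x i = τ`. -/
noncomputable def slice {k : ℕ} (i : Fin (k + 1)) (τ : ℝ) (y : Fin k → ℝ) : Eucl (k + 1) :=
  WithLp.toLp 2 (i.insertNth τ y)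

lemma norm_le_of_coord {n : ℕ} (v : Eucl n) (t : ℝ) (ht : 0 ≤ t) (h : ∀ i, |v i| ≤ t) : ‖v‖ ≤ n * t := by
  rw [EuclideanSpace.norm_eq]
  apply Real.sqrt_le_iff.2
  refine ⟨by positivity, ?_⟩
  calc ∑ i, ‖v i‖ ^ 2 ≤ ∑ i : Fin n, t ^ 2 := by
        apply Finset.sum_le_sum
        intro i _
        have := h i
        rw [Real.norm_eq_abs]
        gcongr
    _ = n * t ^ 2 := by simp
    _ ≤ (n:ℝ) ^ 2 * t ^ 2 := by
        gcongr
        have : (n:ℝ) ≤ (n:ℝ)^2 := by exact_mod_cast Nat.le_self_pow two_ne_zero n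
        exact this
    _ = _ := by ring

lemma slice_hasFDerivAt {k : ℕ} (i : Fin (k + 1)) (τ : ℝ) :
    ∃ A : (Fin k → ℝ) →L[ℝ] Eucl (k + 1), ‖A‖ₑ ≤ ENNReal.ofReal (k + 1) ∧
      ∀ y, slice i τ y = A y + slice i τ 0 := by
  let A0 : (Fin k → ℝ) →ₗ[ℝ] Eucl (k + 1) :=
    { toFun := fun y => slice i 0 y
      map_add' := by
        intro x y
        ext j
        refine Fin.succAboveCases i ?_ (fun j => ?_) j <;> simp [slice]
      map_smul' := by
        intro c y
        ext j
        refine Fin.succAboveCases i ?_ (fun j => ?_) j <;> simp [slice] }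
  refine ⟨LinearMap.toContinuousLinearMap A0, ?_, ?_⟩
  · rw [← ofReal_norm]
    apply ENNReal.ofReal_le_ofReal
    apply ContinuousLinearMap.opNorm_le_bound _ (by positivity)
    intro y
    have := norm_le_of_coord (A0 y) ‖y‖ (norm_nonneg _) (by
      intro j
      refine Fin.succAboveCases i ?_ (fun j => ?_) j
      · simp [A0, slice]
      · simpa [A0, slice] using norm_le_pi_norm y j)
    simpa using this
  · intro y
    ext j
    refine Fin.succAboveCases i ?_ (fun j => ?_) j <;> simp [slice, A0]

lemma slice_measurePreserving {k : ℕ} (i : Fin (k + 1)) :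
    MeasurePreserving (fun p : ℝ × (Fin k → ℝ) => slice i p.1 p.2) := by
  have h1 := (volume_preserving_piFinSuccAbove (fun _ : Fin (k + 1) => ℝ) i).symm
  exact (PiLp.volume_preserving_toLp (Fin (k+1))).comp h1

lemma exists_slice {k : ℕ} (Psi : Eucl (k + 1) → ℝ≥0∞) (hPsi : Measurable Psi) (i : Fin (k + 1))
    (a r : ℝ) (hr : 0 < r) (c : Fin k → ℝ) (R : ℝ) (S : Set (Eucl (k + 1))) (hSm : MeasurableSet S)
    (hS : ∀ τ ∈ Ioo a (a + r), ∀ y ∈ closedBall c R, slice i τ y ∈ S) :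
    ∃ τ ∈ Ioo a (a + r), ∫⁻ y in closedBall c R, Psi (slice i τ y) ≤
      ENNReal.ofReal r⁻¹ * ∫⁻ x in S, Psi x := by
  have hmp := slice_measurePreserving i
  have hm : Measurable (fun p : ℝ × (Fin k → ℝ) => Psi (slice i p.1 p.2)) := hPsi.comp hmp.measurable
  obtain ⟨τ, hτ, h⟩ := exists_le_setLAverage (μ := volume) (s := Ioo a (a + r))
    (f := fun τ => ∫⁻ y in closedBall c R, Psi (slice i τ y)) (by simp [hr]) (by simp)
    hm.lintegral_prod_right'.aemeasurable
  refine ⟨τ, hτ, h.trans ?_⟩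
  rw [setLAverage_eq, Real.volume_Ioo, add_sub_cancel_left, ENNReal.div_eq_inv_mul,
    ENNReal.ofReal_inv_of_pos hr]
  gcongr
  calc _ = ∫⁻ p in Ioo a (a + r) ×ˢ closedBall c R, Psi (slice i p.1 p.2) := by
        rw [Measure.volume_eq_prod, ← Measure.prod_restrict, lintegral_prod _ hm.aemeasurable]
    _ ≤ ∫⁻ p : ℝ × (Fin k → ℝ), S.indicator Psi (slice i p.1 p.2) := by
        rw [← lintegral_indicator (measurableSet_Ioo.prod measurableSet_closedBall)]
        apply lintegral_mono
        intro p
        by_cases hp : p ∈ Ioo a (a + r) ×ˢ closedBall c R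
        · simp only
          rw [indicator_of_mem hp, indicator_of_mem (hS _ hp.1 _ hp.2)]
        · rw [indicator_of_notMem hp]; exact zero_le
    _ = ∫⁻ x, S.indicator Psi x := hmp.lintegral_comp (hPsi.indicator hSm)
    _ = _ := lintegral_indicator hSm _

lemma max_principle {n : ℕ} (hn : 0 < n) (Ω : Set (Eucl n)) (f : Eucl n → Eucl n)
    (hf_cont : ContinuousOn f Ω)
    (hf_open : ∀ U : Set (Eucl n), U ⊆ Ω → IsOpen U → IsOpen (f '' U))
    (K U : Set (Eucl n)) (hK : IsCompact K) (hKΩ : K ⊆ Ω) (hU : IsOpen U) (hUK : U ⊆ K)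
    (c : Eucl n) (B : ℝ) (hB : ∀ y ∈ K \ U, dist (f y) c ≤ B) :
    ∀ x ∈ K, dist (f x) c ≤ B := by
  intro x hx
  have hcont : ContinuousOn (fun y => dist (f y) c) K := continuous_dist.comp_continuousOn ((hf_cont.mono hKΩ).prodMk continuousOn_const)
  obtain ⟨x1, hx1, hmax⟩ := hK.exists_isMaxOn ⟨x, hx⟩ hcont
  by_cases h : x1 ∈ U
  · exfalso
    have : Nonempty (Fin n) := ⟨⟨0, hn⟩⟩
    have hop := hf_open U (hUK.trans hKΩ) hU
    have hsub : f '' U ⊆ closedBall c (dist (f x1) c) := by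
      rintro _ ⟨y, hy, rfl⟩
      exact hmax (hUK hy)
    have h2 := interior_maximal hsub hop (mem_image_of_mem f h)
    rw [interior_closedBall' c] at h2
    exact lt_irrefl _ (mem_ball.1 h2)
  · exact (hmax hx).trans (hB x1 ⟨hx1, h⟩)

section Stepanov
variable {E : Type*} [NormedAddCommGroup E] [NormedSpace ℝ E]

lemma exists_lip_minorant (F : E → ℝ) (U : Set E) (N : ℕ) (x0 : E) (hx0 : x0 ∈ U)
    (hF : ∀ z ∈ U, |F z - F x0| ≤ N * dist z x0) :
    ∃ v : E → ℝ, LipschitzWith N v ∧ (∀ z ∈ U, v z ≤ F z) ∧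
      ∀ x ∈ U, (∀ z ∈ U, F x ≤ F z + N * dist x z) → v x = F x := by
  have : Nonempty U := ⟨⟨x0, hx0⟩⟩
  have hbdd : ∀ x : E, BddBelow (range fun z : U => F z + N * dist x (z:E)) := by
    intro x
    refine ⟨F x0 - N * dist x x0, ?_⟩
    rintro _ ⟨z, rfl⟩
    have h1 := (abs_le.1 (hF z z.2)).1
    have h2 := dist_triangle (z:E) x x0
    have h3 : (N:ℝ) * dist (z:E) x0 ≤ N * (dist (z:E) x + dist x x0) := by gcongr
    rw [dist_comm (z:E) x] at h3
    simp only; linarith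
  have hle : ∀ z ∈ U, (⨅ w : U, F w + N * dist z (w:E)) ≤ F z := by
    intro z hz
    have := ciInf_le (hbdd z) ⟨z, hz⟩
    simpa using this
  refine ⟨fun x : E => ⨅ z : U, F z + N * dist x (z:E), ?_, hle, ?_⟩
  · apply LipschitzWith.of_le_add_mul
    intro x y
    rw [← sub_le_iff_le_add]
    apply le_ciInf
    intro z
    have h1 := ciInf_le (hbdd x) z
    have h2 := dist_triangle x y (z:E)
    have h3 : (N:ℝ) * dist x (z:E) ≤ N * (dist x y + dist y (z:E)) := by gcongr
    simp only [NNReal.coe_natCast] at h1 ⊢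
    linarith
  · intro x hx h
    apply le_antisymm (hle x hx)
    apply le_ciInf
    intro z
    exact h z z.2

lemma differentiable_squeeze (f u v : E → ℝ) (x : E) (hu : DifferentiableAt ℝ u x)
    (hv : DifferentiableAt ℝ v x) (hux : u x = f x) (hvx : v x = f x)
    (h : ∀ᶠ y in 𝓝 x, v y ≤ f y ∧ f y ≤ u y) : DifferentiableAt ℝ f x := by
  have hmin : IsLocalMin (fun y => u y - v y) x := by
    filter_upwards [h] with y hy
    simp only [hux, hvx]; linarith [hy.1, hy.2]
  have h0 : fderiv ℝ u x = fderiv ℝ v x := by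
    have := hmin.fderiv_eq_zero
    rw [fderiv_fun_sub hu hv] at this
    exact sub_eq_zero.1 this
  have hu' := hu.hasFDerivAt
  have hv' := hv.hasFDerivAt
  rw [← h0] at hv'
  refine HasFDerivAt.differentiableAt (f' := fderiv ℝ u x) ?_
  rw [hasFDerivAt_iff_isLittleO] at hu' hv' ⊢
  rw [Asymptotics.isLittleO_iff] at hu' hv' ⊢
  intro c hc
  filter_upwards [hu' hc, hv' hc, h] with y h1 h2 h3
  rw [Real.norm_eq_abs, abs_le] at h1 h2 ⊢
  constructor <;> linarith [h1.1, h1.2, h2.1, h2.2, h3.1, h3.2]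

lemma stepanov_real [FiniteDimensional ℝ E] [MeasurableSpace E] [BorelSpace E]
    (μ : Measure E) [μ.IsAddHaarMeasure] (f : E → ℝ) :
    ∀ᵐ x ∂μ, (∃ C r : ℝ, 0 < r ∧ ∀ y ∈ ball x r, |f y - f x| ≤ C * dist y x) →
      DifferentiableAt ℝ f x := by
  have key : ∀ U ∈ TopologicalSpace.countableBasis E, ∀ N : ℕ, ∀ᵐ x ∂μ,
      x ∈ U → (∀ z ∈ U, |f z - f x| ≤ N * dist z x) → DifferentiableAt ℝ f x := by
    intro U hU N
    have hUo : IsOpen U := TopologicalSpace.isOpen_of_mem_countableBasis hU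
    by_cases hex : ∃ x ∈ U, ∀ z ∈ U, |f z - f x| ≤ N * dist z x
    · obtain ⟨x0, hx0, hx0U⟩ := hex
      obtain ⟨v, hvL, hv1, hv2⟩ := exists_lip_minorant f U N x0 hx0 hx0U
      obtain ⟨w, hwL, hw1, hw2⟩ := exists_lip_minorant (fun z => - f z) U N x0 hx0
        (by
          intro z hz
          have := hx0U z hz
          rwa [← abs_neg, show -(-f z - -f x0) = f z - f x0 by ring])
      filter_upwards [hvL.ae_differentiableAt (μ := μ), hwL.ae_differentiableAt (μ := μ)] with x h1 h2 hx hxU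
      refine differentiable_squeeze f (fun y => - w y) v x h2.neg h1 ?_ ?_ ?_
      · rw [hw2 x hx, neg_neg]
        intro z hz
        have := (abs_le.1 (hxU z hz)).2
        rw [dist_comm] at this
        linarith
      · apply hv2 x hx
        intro z hz
        have := (abs_le.1 (hxU z hz)).1
        rw [dist_comm] at this
        linarith
      · filter_upwards [hUo.mem_nhds hx] with y hy
        exact ⟨hv1 y hy, by linarith [hw1 y hy]⟩
    · exact Filter.Eventually.of_forall fun x hx hxU => absurd ⟨x, hx, hxU⟩ hex
  have key2 := (ae_ball_iff (TopologicalSpace.countable_countableBasis E)).2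
    (fun U hU => ae_all_iff.2 (key U hU))
  filter_upwards [key2] with x hx
  rintro ⟨C, r, hr, h⟩
  obtain ⟨U, hU, hxU, hUr⟩ := (TopologicalSpace.isBasis_countableBasis E).mem_nhds_iff.1
    (ball_mem_nhds x hr)
  obtain ⟨N, hN⟩ := exists_nat_ge C
  refine hx U hU N hxU fun z hz => (h z (hUr hz)).trans ?_
  gcongr

lemma stepanov {m : ℕ} [FiniteDimensional ℝ E] [MeasurableSpace E] [BorelSpace E]
    (μ : Measure E) [μ.IsAddHaarMeasure] (f : E → Eucl m) :
    ∀ᵐ x ∂μ, (∃ C r : ℝ, 0 < r ∧ ∀ y ∈ ball x r, dist (f y) (f x) ≤ C * dist y x) →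
      DifferentiableAt ℝ f x := by
  have h := ae_all_iff.2 (fun i : Fin m => stepanov_real μ (fun x => f x i))
  filter_upwards [h] with x hx
  rintro ⟨C, r, hr, hC⟩
  rw [differentiableAt_euclidean]
  intro i
  refine hx i ⟨C, r, hr, fun y hy => le_trans ?_ (hC y hy)⟩
  rw [dist_eq_norm]
  exact PiLp.norm_apply_le (f y - f x) i
end Stepanov

lemma opNorm_le_frobNorm {n m : ℕ} (A : Eucl n →L[ℝ] Eucl m) : ‖A‖ ≤ frobNorm A := by
  apply ContinuousLinearMap.opNorm_le_bound _ (Real.sqrt_nonneg _)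
  intro v
  rw [EuclideanSpace.norm_eq, EuclideanSpace.norm_eq, ← Real.sqrt_mul (by positivity)]
  apply Real.sqrt_le_sqrt
  rw [Finset.sum_mul]
  apply Finset.sum_le_sum
  intro i _
  have hv : v = ∑ j, v j • EuclideanSpace.single j (1:ℝ) := by
    have := (EuclideanSpace.basisFun (Fin n) ℝ).sum_repr v
    simpa using this.symm
  have h1 : (A v) i = ∑ j, (A (EuclideanSpace.single j 1) i) * v j := by
    conv_lhs => rw [hv]
    simp [map_sum, mul_comm]
  rw [h1, Real.norm_eq_abs, sq_abs]
  simpa using Finset.sum_mul_sq_le_sq_mul_sq Finset.univ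
    (fun j => A (EuclideanSpace.single j 1) i) (fun j => v j)

lemma frobNorm_continuous {n m : ℕ} : Continuous (frobNorm : (Eucl n →L[ℝ] Eucl m) → ℝ) := by
  unfold frobNorm
  fun_prop

lemma conv_int {n : ℕ} (Φ η : Eucl n → ℝ≥0∞) (hΦ : Measurable Φ) (hη : Measurable η)
    (hη1 : ∫⁻ w, η w = 1) (x₀ : Eucl n) (ρ ρ' : ℝ) (hs : ∀ w, η w ≠ 0 → ‖w‖ < ρ - ρ') :
    ∫⁻ x in closedBall x₀ ρ', ∫⁻ w, η w * Φ (x - w) ≤ ∫⁻ x in closedBall x₀ ρ, Φ x := by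
  rw [lintegral_lintegral_swap (by fun_prop)]
  calc _ ≤ ∫⁻ w, η w * ∫⁻ x in closedBall x₀ ρ, Φ x := by
        apply lintegral_mono
        intro w
        simp only
        rw [lintegral_const_mul _ (by fun_prop)]
        by_cases hw : η w = 0
        · simp [hw]
        refine mul_le_mul' le_rfl ?_
        rw [← lintegral_indicator measurableSet_closedBall, ← lintegral_indicator measurableSet_closedBall,
          ← lintegral_sub_right_eq_self (fun x => (closedBall x₀ ρ).indicator Φ x) w]
        apply lintegral_mono
        intro x
        by_cases hx : x ∈ closedBall x₀ ρ'
        · simp only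
          rw [indicator_of_mem hx, indicator_of_mem]
          rw [mem_closedBall, dist_eq_norm] at hx ⊢
          have := norm_sub_le (x - x₀) w
          have h2 := hs w hw
          rw [show x - w - x₀ = x - x₀ - w by abel]
          linarith
        · rw [indicator_of_notMem hx]; exact zero_le
    _ = _ := by rw [lintegral_mul_const _ hη, hη1, one_mul]

lemma swap_bound {E : Type*} [MeasureSpace E] [SFinite (volume : Measure E)] (η : E → ℝ≥0∞)
    (hη : Measurable η) (κ : ℝ → ℝ≥0∞) (hκ : Measurable κ) (q : ℝ × E → ℝ≥0∞) (hq : Measurable q)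
    (P : E → ℝ≥0∞) (h : ∀ w, ∫⁻ s in Ioo (0:ℝ) 1, κ s * q (s, w) ≤ P w) :
    ∫⁻ s in Ioo (0:ℝ) 1, κ s * ∫⁻ w, η w * q (s, w) ≤ ∫⁻ w, η w * P w := by
  calc _ = ∫⁻ s in Ioo (0:ℝ) 1, ∫⁻ w, κ s * (η w * q (s, w)) := by
        apply lintegral_congr
        intro s
        rw [lintegral_const_mul _ (by fun_prop)]
    _ = ∫⁻ w, ∫⁻ s in Ioo (0:ℝ) 1, κ s * (η w * q (s, w)) :=
        lintegral_lintegral_swap (by fun_prop)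
    _ ≤ _ := by
        apply lintegral_mono
        intro w
        calc _ = ∫⁻ s in Ioo (0:ℝ) 1, η w * (κ s * q (s, w)) := by
              apply lintegral_congr
              intro s
              ring
          _ = η w * ∫⁻ s in Ioo (0:ℝ) 1, κ s * q (s, w) :=
              lintegral_const_mul _ (by fun_prop)
          _ ≤ _ := mul_le_mul' le_rfl (h w)

lemma face_osc (k : ℕ) (hk : 2 ≤ k) {φ : ℝ → ℝ} (hφ : NondecPos φ) (lam : ℝ → ℝ≥0∞)
    (hlam : Measurable lam)
    (hl : ∀ s a : ℝ, 0 < s → 0 ≤ a → ENNReal.ofReal a ≤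
      lam s + if psi0 k φ a < s then ENNReal.ofReal a else 0)
    (h : Eucl (k+1) → Eucl (k+1)) (hh : ContDiff ℝ 1 h) (η : Eucl (k+1) → ℝ≥0∞) (hη : Measurable η)
    (hη1 : ∫⁻ w, η w = 1) (g : Eucl (k+1) → ℝ) (hg : Measurable g) (hg0 : ∀ x, 0 ≤ g x)
    (i : Fin (k+1)) (τ : ℝ) (c : Fin k → ℝ) (R : ℝ) (hR : 0 < R)
    (hD : ∀ y ∈ closedBall c R, ‖fderiv ℝ h (slice i τ y)‖ₑ ≤
      ∫⁻ w, η w * ENNReal.ofReal (g (slice i τ y - w)))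
    (x x' : Fin k → ℝ) (hx : x ∈ closedBall c R) (hx' : x' ∈ closedBall c R) :
    ‖h (slice i τ x) - h (slice i τ x')‖ₑ ≤
      2 * (ENNReal.ofReal (k + 1) * ENNReal.ofReal (2 * R)) * ((∫⁻ s in Ioo 0 1, lam s) +
        ENNReal.ofReal (((2 * R) ^ k)⁻¹) * ∫⁻ y in closedBall c R,
          ∫⁻ w, η w * ENNReal.ofReal (phi0 φ (g (slice i τ y - w)))) := by
  obtain ⟨A, hA, hsl⟩ := slice_hasFDerivAt i τ
  have hsl' : slice i τ = fun y => A y + slice i τ 0 := funext hsl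
  have hslD : ∀ y, HasFDerivAt (slice i τ) A y := by
    intro y
    rw [hsl']
    exact A.hasFDerivAt.add_const _
  have hslC : ContDiff ℝ 1 (slice i τ) := by
    rw [hsl']; exact A.contDiff.add contDiff_const
  have hslm : Measurable (slice i τ) := hslC.continuous.measurable
  have hpm := psi0_measurable k hφ
  have hint : Measurable (fun p : ℝ × ℝ => if psi0 k φ p.2 < p.1 then ENNReal.ofReal p.2 else 0) :=
    Measurable.ite (measurableSet_lt (hpm.comp measurable_snd) measurable_fst) (by fun_prop) (by fun_prop)
  refine osc_bound2 k (fun y => h (slice i τ y)) (hh.comp hslC) c R hR (ENNReal.ofReal (k+1)) lam hlam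
    (fun s y => ∫⁻ w, η w * (if psi0 k φ (g (slice i τ y - w)) < s then
      ENNReal.ofReal (g (slice i τ y - w)) else 0)) ?_
    (fun y => ∫⁻ w, η w * ENNReal.ofReal (phi0 φ (g (slice i τ y - w)))) ?_ ?_ x hx x' hx'
  · apply Measurable.lintegral_prod_right' (f := fun q : (ℝ × (Fin k → ℝ)) × Eucl (k+1) =>
      η q.2 * (if psi0 k φ (g (slice i τ q.1.2 - q.2)) < q.1.1 then
      ENNReal.ofReal (g (slice i τ q.1.2 - q.2)) else 0))
    apply Measurable.mul (by fun_prop)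
    exact hint.comp (f := fun q : (ℝ × (Fin k → ℝ)) × Eucl (k+1) =>
      (q.1.1, g (slice i τ q.1.2 - q.2))) (by fun_prop)
  · intro s hs y hy
    have hd : fderiv ℝ (fun y => h (slice i τ y)) y = (fderiv ℝ h (slice i τ y)).comp A :=
      (((hh.differentiable one_ne_zero) _).hasFDerivAt.comp y (hslD y)).fderiv
    rw [hd]
    calc _ ≤ ‖fderiv ℝ h (slice i τ y)‖ₑ * ‖A‖ₑ := by
          rw [← ofReal_norm, ← ofReal_norm, ← ofReal_norm, ← ENNReal.ofReal_mul (norm_nonneg _)]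
          exact ENNReal.ofReal_le_ofReal (ContinuousLinearMap.opNorm_comp_le _ _)
      _ ≤ (∫⁻ w, η w * ENNReal.ofReal (g (slice i τ y - w))) * ENNReal.ofReal (k+1) := by
          gcongr
          exact hD y hy
      _ ≤ _ := by
          rw [mul_comm]
          gcongr
          calc _ ≤ ∫⁻ w, (η w * lam s + η w * (if psi0 k φ (g (slice i τ y - w)) < s then
                  ENNReal.ofReal (g (slice i τ y - w)) else 0)) := by
                apply lintegral_mono
                intro w
                simp only
                rw [← mul_add]
                gcongr
                exact hl s _ hs.1 (hg0 _)
            _ = _ := by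
                rw [lintegral_add_left (by fun_prop), lintegral_mul_const _ hη, hη1, one_mul]
  · intro y hy
    have hm2 : Measurable (fun p : ℝ × Eucl (k+1) => (if psi0 k φ (g (slice i τ y - p.2)) < p.1 then
      ENNReal.ofReal (g (slice i τ y - p.2)) else 0)) :=
      hint.comp (f := fun q : ℝ × Eucl (k+1) => (q.1, g (slice i τ y - q.2))) (by fun_prop)
    exact swap_bound η hη (fun s => ENNReal.ofReal ((s^k)⁻¹)) (by fun_prop) _ hm2 _
      (fun w => lintegral_pow_bound k hk hφ _ (hg0 _))

lemma cube_est {k : ℕ} (hk : 2 ≤ k) (Ω : Set (Eucl (k+1))) (f : Eucl (k+1) → Eucl (k+1))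
    (hf_cont : ContinuousOn f Ω)
    (hf_open : ∀ U : Set (Eucl (k+1)), U ⊆ Ω → IsOpen U → IsOpen (f '' U))
    (h : Eucl (k+1) → Eucl (k+1)) (x₀ : Eucl (k+1)) (r ε B : ℝ) (hr : 0 < r) 
    (hΩ : closedBall x₀ (2 * (k+1) * r) ⊆ Ω)
    (hfh : ∀ y ∈ closedBall x₀ (2 * (k+1) * r), dist (h y) (f y) ≤ ε)
    (a b : Fin (k+1) → ℝ) (ha : ∀ i, a i ∈ Ioo (x₀ i - 2 * r) (x₀ i - r))
    (hb : ∀ i, b i ∈ Ioo (x₀ i + r) (x₀ i + 2 * r))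
    (hosc : ∀ i τ, τ = a i ∨ τ = b i → ∀ y ∈ closedBall (fun j => x₀ (i.succAbove j)) (2*r),
      ∀ y' ∈ closedBall (fun j => x₀ (i.succAbove j)) (2*r), dist (h (slice i τ y)) (h (slice i τ y')) ≤ B)
    (x : Eucl (k+1)) (hx : dist x x₀ ≤ r) : dist (f x) (f x₀) ≤ 4 * B + 4 * ε := by
  set K : Set (Eucl (k+1)) := {y | ∀ i, a i ≤ y i ∧ y i ≤ b i} with hKdef
  set U : Set (Eucl (k+1)) := {y | ∀ i, a i < y i ∧ y i < b i} with hUdef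
  have hK2 : ∀ y ∈ K, ∀ i, |y i - x₀ i| ≤ 2 * r := by
    intro y hy i
    have := hy i
    have h1 := ha i
    have h2 := hb i
    rw [abs_le]; constructor <;> linarith [h1.1, h2.2, this.1, this.2]
  have hKb : K ⊆ closedBall x₀ (2 * (k+1) * r) := by
    intro y hy
    rw [mem_closedBall, dist_eq_norm]
    have := norm_le_of_coord (y - x₀) (2 * r) (by positivity) (fun i => by simpa using hK2 y hy i)
    push_cast at this
    linarith
  have hci : ∀ i, Continuous (fun y : Eucl (k+1) => y i) := fun i => by fun_prop
  have hKc : IsClosed K := by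
    rw [hKdef, ofPred_forall]
    exact isClosed_iInter fun i => (isClosed_le continuous_const (hci i)).inter
      (isClosed_le (hci i) continuous_const)
  have hUo : IsOpen U := by
    rw [hUdef, ofPred_forall]
    exact isOpen_iInter_of_finite fun i => (isOpen_lt continuous_const (hci i)).inter
      (isOpen_lt (hci i) continuous_const)
  have hUK : U ⊆ K := fun y hy i => ⟨(hy i).1.le, (hy i).2.le⟩
  have hKcomp : IsCompact K := (isCompact_closedBall x₀ _).of_isClosed_subset hKc hKb
  have hab : ∀ i, a i ≤ b i := fun i => by linarith [(ha i).2, (hb i).1]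
  -- oscillation on faces
  have hface : ∀ i τ, τ = a i ∨ τ = b i → ∀ y ∈ K, ∀ y' ∈ K, y i = τ → y' i = τ →
      dist (h y) (h y') ≤ B := by
    intro i τ hτ y hy y' hy' hyi hyi'
    have hs : ∀ z : Eucl (k+1), z i = τ → slice i τ (fun j => z (i.succAbove j)) = z := by
      intro z hz
      ext j
      refine Fin.succAboveCases i ?_ (fun j => ?_) j <;> simp [slice, hz]
    have hm : ∀ z ∈ K, (fun j => z (i.succAbove j)) ∈ closedBall (fun j => x₀ (i.succAbove j)) (2*r) := by
      intro z hz
      rw [mem_closedBall, dist_pi_le_iff (by positivity)]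
      intro j
      rw [Real.dist_eq]
      exact hK2 z hz _
    have := hosc i τ hτ _ (hm y hy) _ (hm y' hy')
    rwa [hs y hyi, hs y' hyi'] at this
  let p : Eucl (k+1) := WithLp.toLp 2 a
  have hp : p ∈ K := fun i => ⟨le_rfl, hab i⟩
  have hB0 : 0 ≤ B := dist_nonneg.trans (hface 0 (a 0) (Or.inl rfl) p hp p hp rfl rfl)
  have hhK : ∀ y ∈ K \ U, dist (h y) (h p) ≤ 2 * B := by
    rintro y ⟨hy, hyU⟩
    have : ∃ i, y i = a i ∨ y i = b i := by
      by_contra hcon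
      push Not at hcon
      exact hyU fun i => ⟨lt_of_le_of_ne (hy i).1 (hcon i).1.symm, lt_of_le_of_ne (hy i).2 (hcon i).2⟩
    obtain ⟨i, hi | hi⟩ := this
    · have := hface i (a i) (Or.inl rfl) y hy p hp hi rfl
      linarith
    · let q : Eucl (k+1) := WithLp.toLp 2 (Function.update a i (b i))
      have hqi : q i = b i := by simp [q]
      have hqj : ∀ j, j ≠ i → q j = a j := fun j hj => by simp [q, hj]
      have hq : q ∈ K := by
        intro j
        by_cases hj : j = i
        · subst hj; rw [hqi]; exact ⟨hab _, le_rfl⟩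
        · rw [hqj j hj]; exact ⟨le_rfl, hab _⟩
      have : Nontrivial (Fin (k+1)) := Fin.nontrivial_iff_two_le.2 (by omega)
      obtain ⟨j, hj⟩ := exists_ne i
      have h1 := hface i (b i) (Or.inr rfl) y hy q hq hi hqi
      have h2 := hface j (a j) (Or.inl rfl) q hq p hp (hqj j hj) rfl
      have := dist_triangle (h y) (h q) (h p)
      linarith
  have hmax := max_principle (Nat.succ_pos k) Ω f hf_cont hf_open K U hKcomp (hKb.trans hΩ) hUo hUK (f p)
    (2 * B + 2 * ε) (by
      intro y hy
      have h1 := hhK y hy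
      have h2 := hfh y (hKb hy.1)
      have h3 := hfh p (hKb hp)
      rw [dist_comm] at h2
      have := dist_triangle4 (f y) (h y) (h p) (f p)
      linarith)
  have hxK : ∀ z : Eucl (k+1), dist z x₀ ≤ r → z ∈ K := by
    intro z hz i
    have h0 : |z i - x₀ i| ≤ r := by
      rw [dist_eq_norm] at hz
      exact (PiLp.norm_apply_le (z - x₀) i).trans hz
    rw [abs_le] at h0
    constructor <;> linarith [(ha i).2, (hb i).1, h0.1, h0.2]
  have h1 := hmax x (hxK x hx)
  have h2 := hmax x₀ (hxK x₀ (by simp [hr.le]))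
  have := dist_triangle_right (f x) (f x₀) (f p)
  linarith

lemma main_est (k : ℕ) (hk : 2 ≤ k) {φ : ℝ → ℝ} (hφ : NondecPos φ) (lam : ℝ → ℝ≥0∞)
    (hlam : Measurable lam)
    (hl : ∀ s a : ℝ, 0 < s → 0 ≤ a → ENNReal.ofReal a ≤
      lam s + if psi0 k φ a < s then ENNReal.ofReal a else 0)
    (L : ℝ) (hL0 : 0 ≤ L) (hL : ∫⁻ s in Ioo 0 1, lam s ≤ ENNReal.ofReal L)
    (Ω : Set (Eucl (k+1))) (f : Eucl (k+1) → Eucl (k+1))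
    (Df : Eucl (k+1) → Eucl (k+1) →L[ℝ] Eucl (k+1))
    (hf_cont : ContinuousOn f Ω)
    (hf_open : ∀ U : Set (Eucl (k+1)), U ⊆ Ω → IsOpen U → IsOpen (f '' U))
    (hw : IsWeakDerivOn Ω f Df)
    (g : Eucl (k+1) → ℝ) (hg : Measurable g) (hg0 : ∀ x, 0 ≤ g x)
    (x₀ : Eucl (k+1)) (r : ℝ) (hr : 0 < r) (hΩ : closedBall x₀ (3 * (k+1) * r) ⊆ Ω)
    (hgD : ∀ᵐ x ∂volume.restrict (closedBall x₀ (3 * (k+1) * r)), ‖Df x‖ ≤ g x)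
    (C : ℝ) (hC : 0 ≤ C)
    (hM : ∫⁻ x in closedBall x₀ (3 * (k+1) * r), ENNReal.ofReal (phi0 φ (g x)) ≤
      ENNReal.ofReal (C * r ^ (k+1)))
    (x : Eucl (k+1)) (hx : dist x x₀ ≤ r) :
    dist (f x) (f x₀) ≤ (32 * (k+1) * (L + C) + 4) * r := by
  have hρ : 2 * ((k:ℝ)+1) * r < 3 * (k+1) * r := by
    have : 0 < ((k:ℝ)+1) * r := by positivity
    linarith
  obtain ⟨h, η, hh, hη, hη1, hηs, hfh, hhD⟩ := mollify Ω f Df hf_cont hw x₀ _ _ hρ hΩ r hr g hgD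
  have hΦm : Measurable (fun x => ENNReal.ofReal (phi0 φ (g x))) :=
    ENNReal.measurable_ofReal.comp ((phi0_measurable hφ).comp hg)
  set Ψ : Eucl (k+1) → ℝ≥0∞ := fun x => ∫⁻ w, η w * ENNReal.ofReal (phi0 φ (g (x - w))) with hΨ
  have hΨm : Measurable Ψ := by
    apply Measurable.lintegral_prod_right' (f := fun q : Eucl (k+1) × Eucl (k+1) =>
      η q.2 * ENNReal.ofReal (phi0 φ (g (q.1 - q.2))))
    exact (hη.comp measurable_snd).mul (hΦm.comp (measurable_fst.sub measurable_snd))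
  have hΨi : ∫⁻ x in closedBall x₀ (2 * (k+1) * r), Ψ x ≤ ENNReal.ofReal (C * r ^ (k+1)) :=
    (conv_int _ η hΦm hη hη1 x₀ _ _ hηs).trans hM
  have hmem : ∀ i τ, |τ - x₀ i| ≤ 2 * r → ∀ y ∈ closedBall (fun j => x₀ (i.succAbove j)) (2*r),
      slice i τ y ∈ closedBall x₀ (2 * (k+1) * r) := by
    intro i τ hτ y hy
    rw [mem_closedBall, dist_eq_norm]
    have := norm_le_of_coord (slice i τ y - x₀) (2 * r) (by positivity) (by
      intro j
      refine Fin.succAboveCases i ?_ (fun j => ?_) j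
      · simpa [slice] using hτ
      · rw [mem_closedBall, dist_pi_le_iff (by positivity)] at hy
        simpa [slice, Real.dist_eq] using hy j)
    push_cast at this
    linarith
  have hsl : ∀ i a, x₀ i - 2 * r ≤ a → a ≤ x₀ i + r → ∃ τ ∈ Ioo a (a + r),
      ∀ y ∈ closedBall (fun j => x₀ (i.succAbove j)) (2*r),
      ∀ y' ∈ closedBall (fun j => x₀ (i.succAbove j)) (2*r),
        dist (h (slice i τ y)) (h (slice i τ y')) ≤ 8 * (k+1) * (L + C) * r := by
    intro i a ha1 ha2
    have hτ' : ∀ τ ∈ Ioo a (a + r), |τ - x₀ i| ≤ 2 * r := by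
      intro τ hτ
      rw [abs_le]; constructor <;> linarith [hτ.1, hτ.2]
    obtain ⟨τ, hτ, hint⟩ := exists_slice Ψ hΨm i a r hr (fun j => x₀ (i.succAbove j)) (2 * r)
      (closedBall x₀ (2 * (k+1) * r)) measurableSet_closedBall
      (fun τ hτ => hmem i τ (hτ' τ hτ))
    refine ⟨τ, hτ, fun y hy y' hy' => ?_⟩
    have h1 := face_osc k hk hφ lam hlam hl h hh η hη hη1 g hg hg0 i τ _ (2 * r) (by positivity)
      (fun y hy => hhD _ (hmem i τ (hτ' τ hτ) y hy)) y y' hy hy'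
    rw [dist_eq_norm]
    rw [← ofReal_norm] at h1
    rw [← ENNReal.ofReal_le_ofReal_iff (by positivity)]
    refine h1.trans ?_
    calc _ ≤ 2 * (ENNReal.ofReal (k + 1) * ENNReal.ofReal (2 * (2 * r))) * (ENNReal.ofReal L +
          ENNReal.ofReal (((2 * (2 * r)) ^ k)⁻¹) * (ENNReal.ofReal r⁻¹ * ENNReal.ofReal (C * r ^ (k+1)))) := by
          refine mul_le_mul' le_rfl (add_le_add hL (mul_le_mul' le_rfl ?_))
          exact hint.trans (mul_le_mul' le_rfl hΨi)
      _ = ENNReal.ofReal (2 * ((k + 1) * (2 * (2 * r))) * (L + ((2 * (2 * r)) ^ k)⁻¹ * (r⁻¹ * (C * r ^ (k+1))))) := by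
          have hz : (2:ℝ≥0∞) = ENNReal.ofReal 2 := by simp
          rw [hz, ← ENNReal.ofReal_mul (by positivity), ← ENNReal.ofReal_mul (by positivity),
            ← ENNReal.ofReal_mul (by positivity), ← ENNReal.ofReal_mul (by positivity),
            ← ENNReal.ofReal_add hL0 (by positivity), ← ENNReal.ofReal_mul (by positivity)]
      _ ≤ _ := by
          apply ENNReal.ofReal_le_ofReal
          have e1 : ((2 * (2 * r)) ^ k)⁻¹ * (r⁻¹ * (C * r ^ (k+1))) = ((4:ℝ) ^ k)⁻¹ * C := by
            rw [show 2 * (2 * r) = 4 * r by ring, mul_pow]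
            field_simp
            ring
          rw [e1]
          have e2 : ((4:ℝ) ^ k)⁻¹ * C ≤ C := by
            have : ((4:ℝ) ^ k)⁻¹ ≤ 1 := inv_le_one_of_one_le₀ (one_le_pow₀ (by norm_num))
            nlinarith
          have : 2 * ((k + 1) * (2 * (2 * r))) * (L + ((4:ℝ) ^ k)⁻¹ * C) ≤
              2 * ((k + 1) * (2 * (2 * r))) * (L + C) := by gcongr
          linarith
  choose a ha1 ha2 using fun i => hsl i (x₀ i - 2 * r) le_rfl (by linarith)
  choose b hb1 hb2 using fun i => hsl i (x₀ i + r) (by linarith) le_rfl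
  have := cube_est hk Ω f hf_cont hf_open h x₀ r r (8 * (k+1) * (L + C) * r) hr
    ((closedBall_subset_closedBall hρ.le).trans hΩ) hfh a b
    (fun i => ⟨(ha1 i).1, by linarith [(ha1 i).2]⟩) (fun i => ⟨(hb1 i).1, by linarith [(hb1 i).2]⟩)
    (by
      rintro i τ (rfl | rfl)
      · exact ha2 i
      · exact hb2 i) x hx
  linarith

lemma ae_density {n : ℕ} (Φ : Eucl n → ℝ≥0∞) (hΦ : Measurable Φ) (K : Set (Eucl n))
    (hKm : MeasurableSet K) (hK : ∫⁻ x in K, Φ x < ⊤) (c : ℝ) (hc : 0 < c) :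
    ∀ᵐ x, x ∈ interior K → ∃ C r₀ : ℝ, 0 ≤ C ∧ 0 < r₀ ∧ ∀ r, 0 < r → r < r₀ →
      closedBall x (c * r) ⊆ K ∧
      ∫⁻ y in closedBall x (c * r), Φ y ≤ ENNReal.ofReal (C * r ^ n) := by
  have h1 := (Besicovitch.vitaliFamily (volume : Measure (Eucl n))).ae_tendsto_lintegral_div
    (f := K.indicator Φ) (hΦ.indicator hKm).aemeasurable
    (by rw [lintegral_indicator hKm]; exact hK.ne)
  have h2 : ∀ᵐ x, K.indicator Φ x < ⊤ := ae_lt_top (hΦ.indicator hKm)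
    (by rw [lintegral_indicator hKm]; exact hK.ne)
  filter_upwards [h1, h2] with x hx1 hx2 hxK
  have h3 := hx1.comp (Besicovitch.tendsto_filterAt volume x)
  have h4 : ∀ᶠ r in 𝓝[>] (0:ℝ), (∫⁻ y in closedBall x r, K.indicator Φ y) / volume (closedBall x r) <
      K.indicator Φ x + 1 := h3.eventually (gt_mem_nhds (ENNReal.lt_add_right hx2.ne one_ne_zero))
  have h5 : ∀ᶠ r in 𝓝[>] (0:ℝ), closedBall x r ⊆ K := by
    obtain ⟨δ, hδ, hb⟩ := Metric.nhds_basis_closedBall.mem_iff.1 (mem_interior_iff_mem_nhds.1 hxK)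
    filter_upwards [Ioo_mem_nhdsGT hδ] with r hr
    exact (closedBall_subset_closedBall hr.2.le).trans hb
  obtain ⟨δ, hδ, hb⟩ := (mem_nhdsGT_iff_exists_Ioo_subset).1 (h4.and h5)
  rw [mem_Ioi] at hδ
  set V := volume (ball (0 : Eucl n) 1) with hV
  have hVt : V ≠ ⊤ := measure_ball_lt_top.ne
  set A := (K.indicator Φ x + 1) * V with hA
  have hAt : A ≠ ⊤ := ENNReal.mul_ne_top (by simp [hx2.ne]) hVt
  refine ⟨A.toReal * c ^ n, δ / c, by positivity, by positivity, fun r hr0 hr => ?_⟩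
  have hcr : 0 < c * r := by positivity
  obtain ⟨h6, h7⟩ := hb (show c * r ∈ Ioo 0 δ from ⟨hcr, by rwa [lt_div_iff₀' hc] at hr⟩)
  refine ⟨h7, ?_⟩
  have hvpos : volume (closedBall x (c * r)) ≠ 0 := (measure_closedBall_pos volume x hcr).ne'
  have hvtop : volume (closedBall x (c * r)) ≠ ⊤ := measure_closedBall_lt_top.ne
  calc ∫⁻ y in closedBall x (c * r), Φ y = ∫⁻ y in closedBall x (c * r), K.indicator Φ y := by
        apply setLIntegral_congr_fun measurableSet_closedBall
        intro y hy
        exact (indicator_of_mem (h7 hy) Φ).symm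
    _ ≤ (K.indicator Φ x + 1) * volume (closedBall x (c * r)) :=
        (ENNReal.div_le_iff hvpos hvtop).1 h6.le
    _ = (K.indicator Φ x + 1) * (ENNReal.ofReal ((c * r) ^ n) * V) := by
        rw [Measure.addHaar_closedBall volume x hcr.le, finrank_euclideanSpace_fin]
    _ = ENNReal.ofReal ((c * r) ^ n) * A := by rw [hA]; ring
    _ = ENNReal.ofReal ((c * r) ^ n) * ENNReal.ofReal A.toReal := by rw [ENNReal.ofReal_toReal hAt]
    _ = _ := by
        rw [← ENNReal.ofReal_mul (by positivity)]
        congr 1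
        ring

/-- a continuous open mapping of the Orlicz–Sobolev class `W^{1,φ}_loc(Ω)`,
with `φ` nondecreasing satisfying the Calderón-type condition, is totally differentiable
almost everywhere in `Ω`. -/
theorem stmt_0 (n : ℕ) (hn : 3 ≤ n) (Ω : Set (Eucl n)) (hΩ : IsOpen Ω)
    (φ : ℝ → ℝ) (hφ : NondecPos φ) (hcal : CalderonCond n φ)
    (f : Eucl n → Eucl n) (Df : Eucl n → Eucl n →L[ℝ] Eucl n)
    (hf_cont : ContinuousOn f Ω)
    (hf_open : ∀ U : Set (Eucl n), U ⊆ Ω → IsOpen U → IsOpen (f '' U))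
    (hf_sob : MemOrliczSobolevOn φ Ω f Df) :
    ∀ᵐ x ∂volume.restrict Ω, DifferentiableAt ℝ f x := by
  obtain ⟨k, rfl⟩ : ∃ k, n = k + 1 := ⟨n - 1, by omega⟩
  have hk : 2 ≤ k := by omega
  obtain ⟨lam, hlam, hLt, hl⟩ := exists_lambda k hk hφ hcal
  obtain ⟨hw, hfin⟩ := hf_sob
  have hDm : AEMeasurable (fun x => frobNorm (Df x)) (volume.restrict Ω) :=
    frobNorm_continuous.measurable.comp_aemeasurable hw.2.1.aestronglyMeasurable.aemeasurable
  set g : Eucl (k+1) → ℝ := fun x => max 0 (hDm.mk _ x) with hgdef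
  have hg : Measurable g := measurable_const.max hDm.measurable_mk
  have hg0 : ∀ x, 0 ≤ g x := fun x => le_max_left _ _
  have hgeq : ∀ᵐ x ∂volume.restrict Ω, g x = frobNorm (Df x) := by
    filter_upwards [hDm.ae_eq_mk] with x hx
    rw [hgdef]
    simp only
    rw [← hx]
    exact max_eq_right (Real.sqrt_nonneg _)
  have hgD : ∀ᵐ x ∂volume.restrict Ω, ‖Df x‖ ≤ g x := by
    filter_upwards [hgeq] with x hx
    rw [hx]
    exact opNorm_le_frobNorm _
  have hΦm : Measurable (fun x => ENNReal.ofReal (phi0 φ (g x))) :=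
    ENNReal.measurable_ofReal.comp ((phi0_measurable hφ).comp hg)
  have hKfin : ∀ K : Set (Eucl (k+1)), K ⊆ Ω → IsCompact K →
      ∫⁻ x in K, ENNReal.ofReal (phi0 φ (g x)) < ⊤ := by
    intro K hK hKc
    refine lt_of_le_of_lt (lintegral_mono_ae ?_) (hfin K hK hKc)
    filter_upwards [ae_restrict_of_ae_restrict_of_subset hK hgeq] with x hx
    rw [← hx]
    unfold phi0
    split_ifs
    · exact le_rfl
    · simp
  set T : Set (Set (Eucl (k+1))) := {U ∈ TopologicalSpace.countableBasis (Eucl (k+1)) |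
    IsCompact (closure U) ∧ closure U ⊆ Ω} with hT
  have hTc : T.Countable := (TopologicalSpace.countable_countableBasis _).mono (fun U hU => hU.1)
  have key := (ae_ball_iff (μ := (volume : Measure (Eucl (k+1)))) hTc
    (p := fun x U _ => x ∈ interior (closure U) → ∃ C r₀ : ℝ, 0 ≤ C ∧ 0 < r₀ ∧ ∀ r, 0 < r → r < r₀ →
      closedBall x ((3 * (k+1)) * r) ⊆ closure U ∧
      ∫⁻ y in closedBall x ((3 * (k+1)) * r), ENNReal.ofReal (phi0 φ (g y)) ≤
        ENNReal.ofReal (C * r ^ (k+1)))).2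
    (fun U hU => ae_density _ hΦm (closure U) isClosed_closure.measurableSet
      (hKfin _ hU.2.2 hU.2.1) (3 * (k+1)) (by positivity))
  rw [ae_restrict_iff' hΩ.measurableSet]
  filter_upwards [key, stepanov volume f] with x hx hst hxΩ
  apply hst
  obtain ⟨δ, hδ, hδΩ⟩ := Metric.nhds_basis_closedBall.mem_iff.1 (hΩ.mem_nhds hxΩ)
  obtain ⟨U, hU, hxU, hUδ⟩ := (TopologicalSpace.isBasis_countableBasis (Eucl (k+1))).mem_nhds_iff.1
    (closedBall_mem_nhds x hδ)
  have hUcl : closure U ⊆ closedBall x δ := closure_minimal hUδ isClosed_closedBall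
  have hUT : U ∈ T := ⟨hU, (isCompact_closedBall x δ).of_isClosed_subset isClosed_closure hUcl,
    hUcl.trans hδΩ⟩
  have hUo : IsOpen U := TopologicalSpace.isOpen_of_mem_countableBasis hU
  obtain ⟨C, r₀, hC, hr₀, hest⟩ := hx U hUT (interior_maximal subset_closure hUo hxU)
  refine ⟨32 * (k+1) * ((∫⁻ s in Ioo 0 1, lam s).toReal + C) + 4, r₀, hr₀, fun y hy => ?_⟩
  by_cases hyx : y = x
  · simp [hyx]
  have hr : 0 < dist y x := dist_pos.2 hyx
  obtain ⟨h1, h2⟩ := hest _ hr (mem_ball.1 hy)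
  have h3 := h1.trans hUT.2.2
  exact main_est k hk hφ lam hlam hl _ ENNReal.toReal_nonneg (by rw [ENNReal.ofReal_toReal hLt.ne])
    Ω f Df hf_cont hf_open hw g hg hg0 x _ hr h3
    (ae_restrict_of_ae_restrict_of_subset h3 hgD) C hC h2 y le_rfl
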